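/- Let f be a non-nilpotent linear operator on a nonzero finite-dimensional complex vector space V, let ρ(f) be its spectral radius (necessarily ρ(f) > 0), and let ‖·‖ be any norm on the finite-dimensional vector space End(V) of linear operators on V. Then the limit s(f) := lim_{n→∞} (log ‖f^n‖ − n·log ρ(f)) / log n exists; moreover s(f) is a nonnegative integer, and its value is independent of the choice of the norm ‖·‖ on End(V). -/

import Mathlib

/-- The spectral radius of an endomorphism of a finite-dimensional complex vector
space: the maximal absolute value of the roots in `ℂ` of its characteristic
polynomial. -/
noncomputable def specRadEnd {V : Type*} [AddCommGroup V] [Module ℂ V]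
    [FiniteDimensional ℂ V] (f : Module.End ℂ V) : ℝ :=
  ((((LinearMap.charpoly f).roots.map fun z => ‖z‖₊).sup : NNReal) : ℝ)

open Filter Asymptotics Topology Polynomial

namespace Module.End

section Algebra

variable {K V : Type*} [Field K] [AddCommGroup V] [Module K V]

/-- A nonzero vector of the generalized eigenspace of `μ` has a well-defined height. -/
lemma exists_pow_sub_apply_eq_zero_ne_zero {f : End K V} {μ : K} {v : V}
    (hv : v ∈ f.maxGenEigenspace μ) (hv0 : v ≠ 0) :
    ∃ k : ℕ, ((f - μ • (1 : End K V)) ^ (k + 1)) v = 0 ∧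
      ((f - μ • (1 : End K V)) ^ k) v ≠ 0 := by
  classical
  rw [mem_maxGenEigenspace] at hv
  obtain ⟨k, hk⟩ : ∃ k, Nat.find hv = k + 1 :=
    Nat.exists_eq_succ_of_ne_zero fun h0 => hv0 (by simpa [h0] using Nat.find_spec hv)
  exact ⟨k, hk ▸ Nat.find_spec hv, Nat.find_min hv (by omega)⟩

lemma hasEigenvalue_of_pow_sub_apply {f : End K V} {μ : K} {v : V} {k : ℕ}
    (h : ((f - μ • (1 : End K V)) ^ (k + 1)) v = 0)
    (h0 : ((f - μ • (1 : End K V)) ^ k) v ≠ 0) : f.HasEigenvalue μ := by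
  refine hasEigenvalue_of_hasEigenvector (x := ((f - μ • (1 : End K V)) ^ k) v) ⟨?_, h0⟩
  rw [mem_eigenspace_iff]
  rw [pow_succ', Module.End.mul_apply] at h
  simpa [sub_eq_zero] using h

lemma lt_finrank_of_pow_sub_apply [FiniteDimensional K V] {f : End K V} {μ : K} {v : V} {k : ℕ}
    (h : ((f - μ • (1 : End K V)) ^ (k + 1)) v = 0)
    (h0 : ((f - μ • (1 : End K V)) ^ k) v ≠ 0) : k < Module.finrank K V := by
  by_contra! hk
  have hv : v ∈ f.maxGenEigenspace μ := (mem_maxGenEigenspace f μ v).2 ⟨_, h⟩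
  rw [maxGenEigenspace_eq_genEigenspace_finrank] at hv
  rw [mem_genEigenspace_nat, LinearMap.mem_ker] at hv
  apply h0
  rw [← Nat.sub_add_cancel hk, pow_add, Module.End.mul_apply, hv, map_zero]

lemma pow_apply_eq_sum {f : End K V} {μ : K} {v : V} {k : ℕ}
    (h : ((f - μ • (1 : End K V)) ^ (k + 1)) v = 0) (n : ℕ) :
    (f ^ n) v = ∑ j ∈ Finset.range (k + 1),
      ((n.choose j : K) * μ ^ (n - j)) • ((f - μ • (1 : End K V)) ^ j) v := by
  set g := f - μ • (1 : End K V) with hg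
  have hterm : ∀ j, (g ^ j * (μ • (1 : End K V)) ^ (n - j) * (n.choose j : End K V)) v =
      ((n.choose j : K) * μ ^ (n - j)) • (g ^ j) v := by
    intro j
    have : (g ^ j * (μ • (1 : End K V)) ^ (n - j) * (n.choose j : End K V)) =
        ((n.choose j : K) * μ ^ (n - j)) • g ^ j := by
      rw [_root_.smul_pow, one_pow, ← nsmul_one (n.choose j), ← Nat.cast_smul_eq_nsmul K]
      simp [smul_smul]
    rw [this, LinearMap.smul_apply]
  have hfg : f = g + μ • (1 : End K V) := by simp [hg]
  have hc : Commute g (μ • (1 : End K V)) := (Commute.one_right g).smul_right μ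
  conv_lhs => rw [hfg, hc.add_pow, LinearMap.sum_apply]
  simp_rw [hterm]
  have hz : ∀ j, k + 1 ≤ j → (g ^ j) v = 0 := fun j hj => by
    rw [← Nat.sub_add_cancel hj, pow_add, Module.End.mul_apply, h, map_zero]
  rcases le_total n k with hnk | hkn
  · refine Finset.sum_subset (Finset.range_mono (by omega)) fun j _ hj => ?_
    rw [Finset.mem_range, not_lt] at hj
    simp [Nat.choose_eq_zero_of_lt (show n < j by omega)]
  · refine (Finset.sum_subset (Finset.range_mono (by omega)) fun j _ hj => ?_).symm
    rw [Finset.mem_range, not_lt] at hj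
    rw [hz j hj, smul_zero]

end Algebra

section Growth

variable {V : Type*} [NormedAddCommGroup V] [NormedSpace ℂ V]

lemma choose_mul_pow_smul_isTheta {μ : ℂ} (hμ : μ ≠ 0) (j : ℕ) {w : V} (hw : w ≠ 0) :
    (fun n : ℕ => ((n.choose j : ℂ) * μ ^ (n - j)) • w) =Θ[atTop]
      fun n : ℕ => (n : ℝ) ^ j * ‖μ‖ ^ n := by
  have hμ' : ‖μ‖ ≠ 0 := norm_ne_zero_iff.2 hμ
  have h1 : (fun n : ℕ => ‖((n.choose j : ℂ) * μ ^ (n - j)) • w‖) =ᶠ[atTop]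
      fun n : ℕ => (‖w‖ * (‖μ‖ ^ j)⁻¹) * ((n.choose j : ℝ) * ‖μ‖ ^ n) := by
    filter_upwards [eventually_ge_atTop j] with n hn
    rw [norm_smul, norm_mul, norm_pow, Complex.norm_natCast, pow_sub₀ _ hμ' hn]
    ring
  rw [← isTheta_norm_left]
  refine h1.trans_isTheta (IsTheta.const_mul_left ?_ ?_)
  · exact mul_ne_zero (norm_ne_zero_iff.2 hw) (inv_ne_zero (pow_ne_zero _ hμ'))
  · exact (isTheta_choose j).mul (isTheta_refl _ _)

lemma pow_apply_isTheta {f : End ℂ V} {μ : ℂ} {v : V} {k : ℕ} (hμ : μ ≠ 0)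
    (h : ((f - μ • (1 : End ℂ V)) ^ (k + 1)) v = 0)
    (h0 : ((f - μ • (1 : End ℂ V)) ^ k) v ≠ 0) :
    (fun n : ℕ => (f ^ n) v) =Θ[atTop] fun n : ℕ => (n : ℝ) ^ k * ‖μ‖ ^ n := by
  simp_rw [pow_apply_eq_sum h, Finset.sum_range_succ, add_comm (Finset.sum _ _)]
  have hlast := choose_mul_pow_smul_isTheta hμ k h0
  refine hlast.add_isLittleO (IsLittleO.fun_sum fun j hj => ?_)
  by_cases hw : ((f - μ • (1 : End ℂ V)) ^ j) v = 0
  · simp [hw]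
  · refine (choose_mul_pow_smul_isTheta hμ j hw).trans_isLittleO ?_
    refine IsLittleO.mul_isBigO ?_ (isBigO_refl _ _)
    exact (isLittleO_pow_pow_atTop_of_lt (Finset.mem_range.1 hj)).comp_tendsto
      tendsto_natCast_atTop_atTop

lemma pow_apply_isBigO_of_norm_lt {f : End ℂ V} {μ : ℂ} {v : V} {k : ℕ} {r : ℝ}
    (h : ((f - μ • (1 : End ℂ V)) ^ (k + 1)) v = 0)
    (h0 : ((f - μ • (1 : End ℂ V)) ^ k) v ≠ 0) (hr : ‖μ‖ < r) :
    (fun n : ℕ => (f ^ n) v) =O[atTop] fun n : ℕ => r ^ n := by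
  rcases eq_or_ne μ 0 with rfl | hμ
  · refine EventuallyEq.trans_isBigO (f₂ := fun _ => (0 : V)) ?_ (isBigO_zero _ _)
    filter_upwards [eventually_ge_atTop (k + 1)] with n hn
    rw [zero_smul, sub_zero] at h
    rw [← Nat.sub_add_cancel hn, pow_add, Module.End.mul_apply, h, map_zero]
  · refine (pow_apply_isTheta hμ h h0).isBigO.trans ?_
    exact (isLittleO_pow_const_mul_const_pow_const_pow_of_norm_lt k (by simpa using hr)).isBigO

/-- The vectors whose orbit under `f` grows at most as fast as `g`. -/
def growthSubmodule (f : End ℂ V) (g : ℕ → ℝ) : Submodule ℂ V where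
  carrier := {v | (fun n : ℕ => (f ^ n) v) =O[atTop] g}
  zero_mem' := by simpa using isBigO_zero g atTop
  add_mem' {v w} hv hw := by
    simp only [Set.mem_ofPred_eq, map_add] at *
    exact hv.add hw
  smul_mem' c v hv := by
    simp only [Set.mem_ofPred_eq, map_smul] at *
    exact hv.const_smul_left c

lemma mem_growthSubmodule {f : End ℂ V} {g : ℕ → ℝ} {v : V} :
    v ∈ growthSubmodule f g ↔ (fun n : ℕ => (f ^ n) v) =O[atTop] g := Iff.rfl

/-- If `r > 0` is the largest modulus of an eigenvalue of `f`, the orbits of `f` grow at most like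
`n ^ s * r ^ n` for some natural number `s`, and one of them grows exactly at this rate. -/
theorem exists_pow_apply_isBigO_and_isTheta [FiniteDimensional ℂ V] {f : End ℂ V} {r : ℝ}
    (hr : 0 < r) (hle : ∀ μ, f.HasEigenvalue μ → ‖μ‖ ≤ r)
    (hex : ∃ μ, f.HasEigenvalue μ ∧ ‖μ‖ = r) :
    ∃ s : ℕ, (∀ v, (fun n : ℕ => (f ^ n) v) =O[atTop] fun n : ℕ => (n : ℝ) ^ s * r ^ n) ∧
      ∃ v, (fun n : ℕ => (f ^ n) v) =Θ[atTop] fun n : ℕ => (n : ℝ) ^ s * r ^ n := by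
  classical
  let P : ℕ → Prop := fun k => ∃ μ : ℂ, ‖μ‖ = r ∧ ∃ v : V,
    ((f - μ • (1 : End ℂ V)) ^ (k + 1)) v = 0 ∧ ((f - μ • (1 : End ℂ V)) ^ k) v ≠ 0
  have hP0 : P 0 := by
    obtain ⟨μ, hμ, hμr⟩ := hex
    obtain ⟨v, hv⟩ := hμ.exists_hasEigenvector
    exact ⟨μ, hμr, v, by simp [hv.apply_eq_smul], by simpa using hv.2⟩
  have hPlt : ∀ k, P k → k ≤ Module.finrank ℂ V := fun k ⟨_, _, _, h, h0⟩ =>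
    (lt_finrank_of_pow_sub_apply h h0).le
  set s := Nat.findGreatest P (Module.finrank ℂ V)
  refine ⟨s, fun v => ?_, ?_⟩
  · suffices growthSubmodule f (fun n : ℕ => (n : ℝ) ^ s * r ^ n) = ⊤ from
      mem_growthSubmodule.1 (this ▸ Submodule.mem_top)
    rw [eq_top_iff, ← iSup_maxGenEigenspace_eq_top f, iSup_le_iff]
    intro μ v hv
    rcases eq_or_ne v 0 with rfl | hv0
    · exact zero_mem _
    obtain ⟨k, h, h0⟩ := exists_pow_sub_apply_eq_zero_ne_zero hv hv0
    have hpow : ∀ k ≤ s, (fun n : ℕ => (n : ℝ) ^ k * r ^ n) =O[atTop]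
        fun n : ℕ => (n : ℝ) ^ s * r ^ n := fun k hk =>
      ((IsBigO.of_bound 1 (by
        filter_upwards [eventually_ge_atTop 1] with n hn
        rw [one_mul, norm_pow, norm_pow]
        exact pow_le_pow_right₀ (by simpa using hn) hk))).mul (isBigO_refl _ _)
    rw [mem_growthSubmodule]
    rcases (hle μ (hasEigenvalue_of_pow_sub_apply h h0)).lt_or_eq with hlt | rfl
    · exact (pow_apply_isBigO_of_norm_lt h h0 hlt).trans (by simpa using hpow 0 (Nat.zero_le _))
    · have hk : P k := ⟨μ, rfl, v, h, h0⟩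
      exact (pow_apply_isTheta (norm_pos_iff.1 hr) h h0).isBigO.trans
        (hpow k (Nat.le_findGreatest (hPlt k hk) hk))
  · obtain ⟨μ, rfl, v, h, h0⟩ := Nat.findGreatest_spec (P := P) (Nat.zero_le _) hP0
    exact ⟨v, pow_apply_isTheta (norm_pos_iff.1 hr) h h0⟩

end Growth

section SpectralRadius

variable {V : Type*} [AddCommGroup V] [Module ℂ V] [FiniteDimensional ℂ V]

lemma norm_le_specRadEnd {f : End ℂ V} {μ : ℂ} (hμ : f.HasEigenvalue μ) :
    ‖μ‖ ≤ specRadEnd f := by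
  have hmem : μ ∈ (LinearMap.charpoly f).roots :=
    (mem_roots (LinearMap.charpoly_monic f).ne_zero).2 ((hasEigenvalue_iff_isRoot_charpoly f μ).1 hμ)
  exact NNReal.coe_le_coe.2 (Multiset.le_sup (Multiset.mem_map_of_mem (fun z => ‖z‖₊) hmem))

lemma _root_.Multiset.sup_mem {α : Type*} [LinearOrder α] [OrderBot α] {m : Multiset α}
    (hm : m ≠ 0) : m.sup ∈ m := by
  induction m using Multiset.induction with
  | empty => exact absurd rfl hm
  | cons a m ih =>
    rcases eq_or_ne m 0 with rfl | h0
    · simp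
    · rcases le_total a m.sup with h | h
      · simpa [Multiset.sup_cons, h] using Or.inr (ih h0)
      · simp [Multiset.sup_cons, h]

lemma exists_hasEigenvalue_norm_eq_specRadEnd [Nontrivial V] (f : End ℂ V) :
    ∃ μ, f.HasEigenvalue μ ∧ ‖μ‖ = specRadEnd f := by
  have hne : (LinearMap.charpoly f).roots ≠ 0 := by
    obtain ⟨μ, hμ⟩ := exists_eigenvalue f
    exact fun h0 => Multiset.notMem_zero μ (h0 ▸
      (mem_roots (LinearMap.charpoly_monic f).ne_zero).2
        ((hasEigenvalue_iff_isRoot_charpoly f μ).1 hμ))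
  obtain ⟨μ, hμ, h⟩ := Multiset.mem_map.1 <| Multiset.sup_mem
    (m := (LinearMap.charpoly f).roots.map fun z => ‖z‖₊) (by simpa using hne)
  exact ⟨μ, (hasEigenvalue_iff_isRoot_charpoly f μ).2 (isRoot_of_mem_roots hμ),
    congrArg NNReal.toReal h⟩

lemma specRadEnd_pos {f : End ℂ V} (hf : ¬ IsNilpotent f) : 0 < specRadEnd f := by
  refine lt_of_le_of_ne (NNReal.coe_nonneg _) fun h0 => hf ?_
  have hroots : ∀ z ∈ (LinearMap.charpoly f).roots, z = 0 := fun z hz => by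
    have := norm_le_specRadEnd ((hasEigenvalue_iff_isRoot_charpoly f z).2 (isRoot_of_mem_roots hz))
    rw [← h0] at this
    exact norm_le_zero_iff.1 this
  have hs := IsAlgClosed.splits (LinearMap.charpoly f)
  have hprod := hs.eq_prod_roots_of_monic (LinearMap.charpoly_monic f)
  rw [Multiset.eq_replicate_card.2 hroots] at hprod
  refine ⟨Multiset.card (LinearMap.charpoly f).roots, ?_⟩
  have := LinearMap.aeval_self_charpoly f
  rw [hprod] at this
  simpa using this

end SpectralRadius

end Module.End

/-- Any function satisfying the axioms of a norm on a finite-dimensional space is equivalent to the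
norm transported along a linear equivalence. -/
lemma LinearEquiv.isTheta_of_norm_axioms {ι E F : Type*} [AddCommGroup E] [Module ℂ E]
    [FiniteDimensional ℂ E] [NormedAddCommGroup F] [NormedSpace ℂ F] (e : E ≃ₗ[ℂ] F) {N : E → ℝ}
    (hnonneg : ∀ x, 0 ≤ N x) (hzero : ∀ x, N x = 0 ↔ x = 0)
    (hsmul : ∀ (c : ℂ) x, N (c • x) = ‖c‖ * N x) (hadd : ∀ x y, N (x + y) ≤ N x + N y)
    (l : Filter ι) (u : ι → E) : (fun i => N (u i)) =Θ[l] fun i => e (u i) := by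
  let _ : Norm E := ⟨N⟩
  have core : NormedSpace.Core ℂ E :=
    { norm_nonneg := hnonneg
      norm_smul := hsmul
      norm_triangle := hadd
      norm_eq_zero_iff := hzero }
  let _ : NormedAddCommGroup E := NormedAddCommGroup.ofCore core
  let _ : NormedSpace ℂ E := NormedSpace.ofCore core
  have h : u =Θ[l] fun i => e (u i) :=
    ⟨e.toContinuousLinearEquiv.isBigO_comp_rev u l, e.toContinuousLinearEquiv.isBigO_comp u l⟩
  exact h.norm_left

lemma LinearMap.constr_symm_isTheta {ι V : Type*} [NormedAddCommGroup V] [NormedSpace ℂ V]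
    [Fintype ι] [FiniteDimensional ℂ V] (b : Module.Basis ι ℂ V) {T : ℕ → Module.End ℂ V}
    {g : ℕ → ℝ} (hO : ∀ v, (fun n => T n v) =O[atTop] g) (hT : ∃ v, (fun n => T n v) =Θ[atTop] g) :
    (fun n => (b.constr ℂ).symm (T n)) =Θ[atTop] g := by
  refine ⟨isBigO_pi.2 fun i => by simpa using hO (b i), ?_⟩
  obtain ⟨v, hv⟩ := hT
  let ev : (ι → V) →ₗ[ℂ] V := (LinearMap.applyₗ v).comp (b.constr ℂ).toLinearMap
  have h := (LinearMap.toContinuousLinearMap ev).isBigO_comp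
    (fun n => (b.constr ℂ).symm (T n)) atTop
  refine hv.symm.isBigO.trans ?_
  simpa [ev] using h

lemma tendsto_log_sub_div_log_of_isTheta {a : ℕ → ℝ} {r : ℝ} (hr : 0 < r) {s : ℕ}
    (ha : ∀ n, 0 ≤ a n) (h : a =Θ[atTop] fun n : ℕ => (n : ℝ) ^ s * r ^ n) :
    Tendsto (fun n : ℕ => (Real.log (a n) - n * Real.log r) / Real.log n) atTop (𝓝 (s : ℝ)) := by
  obtain ⟨C, hC, hup⟩ := h.1.exists_pos
  obtain ⟨c, hc, hlo⟩ := h.2.exists_pos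
  have hlog : Tendsto (fun n : ℕ => Real.log n) atTop atTop :=
    Real.tendsto_log_atTop.comp tendsto_natCast_atTop_atTop
  have hL : Tendsto (fun n : ℕ => (s : ℝ) + -Real.log c / Real.log n) atTop (𝓝 (s : ℝ)) := by
    simpa using (hlog.const_div_atTop (-Real.log c)).const_add (s : ℝ)
  have hU : Tendsto (fun n : ℕ => (s : ℝ) + Real.log C / Real.log n) atTop (𝓝 (s : ℝ)) := by
    simpa using (hlog.const_div_atTop (Real.log C)).const_add (s : ℝ)
  have key : ∀ᶠ n : ℕ in atTop,
      (s : ℝ) + -Real.log c / Real.log n ≤ (Real.log (a n) - n * Real.log r) / Real.log n ∧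
      (Real.log (a n) - n * Real.log r) / Real.log n ≤ (s : ℝ) + Real.log C / Real.log n := by
    filter_upwards [hup.bound, hlo.bound, hlog.eventually_gt_atTop 0, eventually_gt_atTop 0]
      with n h1 h2 h3 h4
    have hn : (0 : ℝ) < n := by exact_mod_cast h4
    have hg : 0 < (n : ℝ) ^ s * r ^ n := by positivity
    rw [Real.norm_of_nonneg hg.le, Real.norm_of_nonneg (ha n)] at h1 h2
    have hapos : 0 < a n := pos_of_mul_pos_right (hg.trans_le h2) hc.le
    have hlg : Real.log ((n : ℝ) ^ s * r ^ n) = s * Real.log n + n * Real.log r := by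
      rw [Real.log_mul (by positivity) (by positivity), Real.log_pow, Real.log_pow]
    have h1' := Real.log_le_log hapos h1
    have h2' := Real.log_le_log hg h2
    rw [Real.log_mul hC.ne' hg.ne', hlg] at h1'
    rw [Real.log_mul hc.ne' hapos.ne', hlg] at h2'
    constructor
    · rw [le_div_iff₀ h3, add_mul, div_mul_cancel₀ _ h3.ne']
      linarith
    · rw [div_le_iff₀ h3, add_mul, div_mul_cancel₀ _ h3.ne']
      linarith
  exact tendsto_of_tendsto_of_tendsto_of_le_of_le' hL hU
    (key.mono fun _ h => h.1) (key.mono fun _ h => h.2)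

/-- For a non-nilpotent endomorphism `f` of a nonzero finite-dimensional complex
vector space, the polynomial growth rate
`s(f) = lim_n (log ‖f^n‖ - n·log ρ(f)) / log n` exists, is a nonnegative integer,
and is independent of the choice of norm on `End(V)`. -/
theorem polynomialGrowthRate_exists_nat_and_norm_independent
    (V : Type*) [AddCommGroup V] [Module ℂ V] [FiniteDimensional ℂ V]
    [Nontrivial V] (f : Module.End ℂ V) (hf : ¬ IsNilpotent f) :
    ∃ s : ℕ, ∀ N : Module.End ℂ V → ℝ,
      (∀ g, 0 ≤ N g) →
      (∀ g, N g = 0 ↔ g = 0) →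
      (∀ (c : ℂ) (g : Module.End ℂ V), N (c • g) = ‖c‖ * N g) →
      (∀ g h : Module.End ℂ V, N (g + h) ≤ N g + N h) →
      Filter.Tendsto
        (fun n : ℕ =>
          (Real.log (N (f ^ n)) - n * Real.log (specRadEnd f)) / Real.log n)
        Filter.atTop (nhds (s : ℝ)) := by
  let b := Module.finBasis ℂ V
  let _ : NormedAddCommGroup V :=
    NormedAddCommGroup.induced V (Fin (Module.finrank ℂ V) → ℂ) b.equivFun b.equivFun.injective
  let _ : NormedSpace ℂ V := NormedSpace.induced ℂ V (Fin (Module.finrank ℂ V) → ℂ) b.equivFun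
  have hr := Module.End.specRadEnd_pos hf
  obtain ⟨s, hO, hT⟩ := Module.End.exists_pow_apply_isBigO_and_isTheta hr
    (fun _ => Module.End.norm_le_specRadEnd)
    (Module.End.exists_hasEigenvalue_norm_eq_specRadEnd f)
  refine ⟨s, fun N hnonneg hzero hsmul hadd => ?_⟩
  exact tendsto_log_sub_div_log_of_isTheta hr (fun n => hnonneg _)
    (((b.constr ℂ).symm.isTheta_of_norm_axioms hnonneg hzero hsmul hadd atTop _).trans
      (LinearMap.constr_symm_isTheta b hO hT))
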